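/- arXiv:2411.08178 — 5 statements merged into one kernel-verified Lean document; each statement's English description precedes it below -/
import Mathlib

section
/- Let h : ℝ^N → ℝ ∪ {+∞} be a proper, lower semicontinuous, convex function, let λ > 0, let D ∈ ℝ^{N×N} be symmetric positive definite, and let U ∈ ℝ^{N×r}. Set W = D + U Uᵀ (which is symmetric positive definite). Then for every x ∈ ℝ^N there exists a unique γ* ∈ ℝ^r satisfying Uᵀ ( x − prox_{λh}^D ( x − D^{-1} U γ* ) ) + γ* = 0, and moreover prox_{λh}^W(x) = prox_{λh}^D ( x − D^{-1} U γ* ). -/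
/-!
A point `z` minimizes `f u + ½ B (u - x, u - x)` if and only if it minimizes the linearization
`f u + B (u, z - x)`, so the metric and the base point matter only through the functional
`B (·, z - x)`. If `γ = Uᵀ (z - x)`, then `D (z - (x - D⁻¹ U γ)) = D (z - x) + U γ = W (z - x)`, so
`z` is the `D`-proximal point of `x - D⁻¹ U γ` exactly when it is the `W`-proximal point of `x`.
Solutions `γ` therefore correspond to `W`-proximal points of `x`. There is exactly one: the
objective is coercive, because a convex lower semicontinuous function decreases at most linearly,
and adding the two linearized inequalities for minimizers `z`, `z'` gives `‖z - z'‖_W² ≤ 0`.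
-/

open Matrix

/-- `z` is a minimizer over `ℝ^N` of the weighted proximal objective
`u ↦ lam * h u + (1/2) ‖u - x‖_W²`, i.e. `z = prox_{lam h}^W (x)` when the
minimizer is unique. -/
def IsWProx {N : ℕ} (h : (Fin N → ℝ) → EReal) (lam : ℝ)
    (W : Matrix (Fin N) (Fin N) ℝ) (x z : Fin N → ℝ) : Prop :=
  ∀ u : Fin N → ℝ,
    (lam : EReal) * h z + (((1 / 2 : ℝ) * ((z - x) ⬝ᵥ W.mulVec (z - x)) : ℝ) : EReal) ≤
      (lam : EReal) * h u + (((1 / 2 : ℝ) * ((u - x) ⬝ᵥ W.mulVec (u - x)) : ℝ) : EReal)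

open Filter Topology

/-- Proper convex functions with values in `ℝ ∪ {+∞}`. The codomain is `EReal` with `⊥` excluded,
and convexity is that of the real-valued restriction to the effective domain, so that the theory of
`ConvexOn` applies. -/
structure IsProperConvex {E : Type*} [AddCommGroup E] [Module ℝ E] (f : E → EReal) : Prop where
  exists_ne_top : ∃ x, f x ≠ ⊤
  ne_bot : ∀ x, f x ≠ ⊥
  convexOn_toReal : ConvexOn ℝ {x | f x ≠ ⊤} fun x ↦ (f x).toReal

/-- `z` is a proximal point of `f` at `x` in the metric given by the bilinear form `B`, that is, a
minimizer of `u ↦ f u + ½ B (u - x, u - x)`. A step size `lam` is absorbed into `f`. -/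
def IsProx {E : Type*} [AddCommGroup E] [Module ℝ E] (f : E → EReal) (B : LinearMap.BilinForm ℝ E)
    (x z : E) : Prop :=
  ∀ u, f z + ((1 / 2 * B (z - x) (z - x) : ℝ) : EReal) ≤
    f u + ((1 / 2 * B (u - x) (u - x) : ℝ) : EReal)

lemma forall_add_coe_le_iff_isMinOn_toReal {α : Type*} {f : α → EReal} (hproper : ∃ x, f x ≠ ⊤)
    (hbot : ∀ x, f x ≠ ⊥) (q : α → ℝ) (z : α) :
    (∀ u, f z + (q z : EReal) ≤ f u + (q u : EReal)) ↔
      f z ≠ ⊤ ∧ IsMinOn (fun u ↦ (f u).toReal + q u) {u | f u ≠ ⊤} z := by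
  have hreal : ∀ u, f u ≠ ⊤ → f u + (q u : EReal) = (((f u).toReal + q u : ℝ) : EReal) :=
    fun u hu ↦ by rw [EReal.coe_add, EReal.coe_toReal hu (hbot u)]
  constructor
  · intro hmin
    have hz : f z ≠ ⊤ := by
      intro hz
      obtain ⟨y, hy⟩ := hproper
      have hle := hmin y
      rw [hz, EReal.top_add_coe, hreal y hy] at hle
      exact EReal.coe_ne_top _ (top_le_iff.1 hle)
    refine ⟨hz, isMinOn_iff.2 fun u hu ↦ ?_⟩
    simpa only [hreal z hz, hreal u hu, EReal.coe_le_coe_iff] using hmin u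
  · rintro ⟨hz, hmin⟩ u
    by_cases hu : f u = ⊤
    · simp only [hu, EReal.top_add_coe, le_top]
    · simpa only [hreal z hz, hreal u hu, EReal.coe_le_coe_iff] using isMinOn_iff.1 hmin u hu

lemma exists_forall_le_of_lowerSemicontinuous {α β : Type*} [TopologicalSpace α] [LinearOrder β]
    {F : α → β} (hF : LowerSemicontinuous F) (x₀ : α) (h : ∀ᶠ u in cocompact α, F x₀ ≤ F u) :
    ∃ z, ∀ u, F z ≤ F u := by
  obtain ⟨K, hK, hfar⟩ := mem_cocompact.1 h
  obtain ⟨z, -, hz⟩ := LowerSemicontinuousOn.exists_isMinOn (Set.insert_nonempty x₀ K)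
    (hK.insert x₀) (hF.lowerSemicontinuousOn _)
  refine ⟨z, fun u ↦ ?_⟩
  by_cases hu : u ∈ K
  · exact isMinOn_iff.1 hz u (Set.mem_insert_of_mem x₀ hu)
  · exact (isMinOn_iff.1 hz x₀ (Set.mem_insert x₀ K)).trans (hfar hu)

lemma lowerSemicontinuous_coe_mul {α : Type*} [TopologicalSpace α] {f : α → EReal}
    (hf : LowerSemicontinuous f) {c : ℝ} (hc : 0 < c) :
    LowerSemicontinuous fun u ↦ (c : EReal) * f u := by
  have hc' : (c : EReal) ≠ 0 := EReal.coe_ne_zero.2 hc.ne'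
  have hcont : Continuous fun a : EReal ↦ (c : EReal) * a :=
    continuous_iff_continuousAt.2 fun a ↦
      ContinuousAt.comp (f := fun a : EReal ↦ ((c : EReal), a))
        (EReal.continuousAt_mul (.inl hc') (.inl hc') (.inl (EReal.coe_ne_bot c))
          (.inl (EReal.coe_ne_top c))) (by fun_prop)
  exact hcont.comp_lowerSemicontinuous hf fun _ _ hab ↦
    mul_le_mul_of_nonneg_left hab (EReal.coe_nonneg.2 hc.le)

lemma lowerSemicontinuous_add_coe {α : Type*} [TopologicalSpace α] {f : α → EReal} {q : α → ℝ}
    (hf : LowerSemicontinuous f) (hq : Continuous q) :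
    LowerSemicontinuous fun u ↦ f u + (q u : EReal) :=
  hf.add' (continuous_coe_real_ereal.comp hq).lowerSemicontinuous fun _ ↦
    EReal.continuousAt_add (.inr (EReal.coe_ne_bot _)) (.inr (EReal.coe_ne_top _))

section VectorSpace

variable {E : Type*} [AddCommGroup E] [Module ℝ E]

lemma isProperConvex_of_le_add {f : E → EReal} (hproper : ∃ x, f x ≠ ⊤) (hbot : ∀ x, f x ≠ ⊥)
    (hconv : ∀ x y : E, ∀ a b : ℝ, 0 ≤ a → 0 ≤ b → a + b = 1 →
      f (a • x + b • y) ≤ (a : EReal) * f x + (b : EReal) * f y) :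
    IsProperConvex f := by
  have hle : ∀ x, f x ≠ ⊤ → ∀ y, f y ≠ ⊤ → ∀ a b : ℝ, 0 ≤ a → 0 ≤ b → a + b = 1 →
      f (a • x + b • y) ≤ ((a * (f x).toReal + b * (f y).toReal : ℝ) : EReal) := by
    intro x hx y hy a b ha hb hab
    simpa only [EReal.coe_add, EReal.coe_mul, EReal.coe_toReal hx (hbot x),
      EReal.coe_toReal hy (hbot y)] using hconv x y a b ha hb hab
  have hdom : Convex ℝ {x | f x ≠ ⊤} := fun x hx y hy a b ha hb hab ↦
    ne_top_of_le_ne_top (EReal.coe_ne_top _) (hle x hx y hy a b ha hb hab)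
  refine ⟨hproper, hbot, hdom, fun x hx y hy a b ha hb hab ↦ ?_⟩
  exact EReal.toReal_le_toReal (hle x hx y hy a b ha hb hab) (hbot _) (EReal.coe_ne_top _)

lemma IsProperConvex.coe_mul {f : E → EReal} (hf : IsProperConvex f) {c : ℝ} (hc : 0 < c) :
    IsProperConvex fun u ↦ (c : EReal) * f u := by
  have htop : ∀ u, (c : EReal) * f u ≠ ⊤ ↔ f u ≠ ⊤ := by
    simp [EReal.mul_eq_top, hc, hc.not_gt]
  have hbot : ∀ u, (c : EReal) * f u ≠ ⊥ := by
    simp [EReal.mul_eq_bot, hf.ne_bot, hc.not_gt]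
  refine ⟨hf.exists_ne_top.imp fun u ↦ (htop u).2, hbot, ?_⟩
  simpa only [htop, EReal.toReal_mul, EReal.toReal_coe, smul_eq_mul]
    using hf.convexOn_toReal.smul hc.le

lemma half_mul_bilin_add_smul {B : LinearMap.BilinForm ℝ E} (hB : B.IsSymm) (w v : E) (t : ℝ) :
    1 / 2 * B (w + t • v) (w + t • v) = 1 / 2 * B w w + t * B v w + t ^ 2 / 2 * B v v := by
  simp only [map_add, map_smul, LinearMap.add_apply, LinearMap.smul_apply, smul_eq_mul, hB.eq w v]
  ring

lemma isMinOn_add_half_bilin_iff_isMinOn_add_bilin {s : Set E} {f : E → ℝ} (hf : ConvexOn ℝ s f)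
    {B : LinearMap.BilinForm ℝ E} (hB : B.IsPosSemidef) (x : E) {z : E} (hz : z ∈ s) :
    IsMinOn (fun u ↦ f u + 1 / 2 * B (u - x) (u - x)) s z ↔
      IsMinOn (fun u ↦ f u + B u (z - x)) s z := by
  simp only [isMinOn_iff]
  have hlin : ∀ u, B (u - z) (z - x) = B u (z - x) - B z (z - x) := fun u ↦ by
    rw [LinearMap.BilinForm.sub_left]
  refine ⟨fun hmin u hu ↦ ?_, fun hmin u hu ↦ ?_⟩
  · -- Compare `z` with the points `z + t (u - z)`, divide by `t`, and let `t → 0`.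
    have hseg : ∀ t ∈ Set.Ioo (0 : ℝ) 1,
        f z ≤ f u + B (u - z) (z - x) + t / 2 * B (u - z) (u - z) := by
      rintro t ⟨ht0, ht1⟩
      have hsum : 1 - t + t = 1 := sub_add_cancel 1 t
      have hmem : (1 - t) • z + t • u ∈ s := hf.1 hz hu (by linarith) ht0.le hsum
      have hconv : f ((1 - t) • z + t • u) ≤ (1 - t) * f z + t * f u :=
        hf.2 hz hu (by linarith) ht0.le hsum
      have hle := hmin _ hmem
      rw [show (1 - t) • z + t • u - x = (z - x) + t • (u - z) by module,
        half_mul_bilin_add_smul hB.isSymm] at hle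
      refine le_of_mul_le_mul_left ?_ ht0
      linarith
    have hlim : Tendsto (fun t : ℝ ↦ f u + B (u - z) (z - x) + t / 2 * B (u - z) (u - z))
        (𝓝[>] 0) (𝓝 (f u + B (u - z) (z - x))) :=
      tendsto_nhdsWithin_of_tendsto_nhds (Continuous.tendsto' (by fun_prop) _ _ (by simp))
    have hle := ge_of_tendsto hlim (eventually_of_mem (Ioo_mem_nhdsGT one_pos) hseg)
    linarith [hlin u]
  · have hexpand := half_mul_bilin_add_smul hB.isSymm (z - x) (u - z) 1
    rw [one_smul, sub_add_sub_cancel'] at hexpand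
    linarith [hmin u hu, hlin u, hB.nonneg (u - z)]

lemma isProx_iff_forall_add_bilin_le {f : E → EReal} (hf : IsProperConvex f)
    {B : LinearMap.BilinForm ℝ E} (hB : B.IsPosSemidef) (x z : E) :
    IsProx f B x z ↔
      ∀ u, f z + ((B z (z - x) : ℝ) : EReal) ≤ f u + ((B u (z - x) : ℝ) : EReal) := by
  rw [IsProx, forall_add_coe_le_iff_isMinOn_toReal hf.exists_ne_top hf.ne_bot
      (fun u ↦ 1 / 2 * B (u - x) (u - x)),
    forall_add_coe_le_iff_isMinOn_toReal hf.exists_ne_top hf.ne_bot (fun u ↦ B u (z - x))]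
  exact and_congr_right
    (isMinOn_add_half_bilin_iff_isMinOn_add_bilin hf.convexOn_toReal hB x)

lemma isProx_iff_isProx_of_forall_bilin_eq {f : E → EReal} (hf : IsProperConvex f)
    {B B' : LinearMap.BilinForm ℝ E} (hB : B.IsPosSemidef) (hB' : B'.IsPosSemidef) {x x' z : E}
    (h : ∀ u, B u (z - x) = B' u (z - x')) :
    IsProx f B x z ↔ IsProx f B' x' z := by
  simp only [isProx_iff_forall_add_bilin_le hf hB, isProx_iff_forall_add_bilin_le hf hB', h]

lemma IsProx.unique {f : E → EReal} (hf : IsProperConvex f) {B : LinearMap.BilinForm ℝ E}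
    (hB : B.IsPosSemidef) (hpos : B.toQuadraticMap.PosDef) {x z z' : E} (hz : IsProx f B x z)
    (hz' : IsProx f B x z') : z = z' := by
  rw [isProx_iff_forall_add_bilin_le hf hB, forall_add_coe_le_iff_isMinOn_toReal hf.exists_ne_top
    hf.ne_bot (fun u ↦ B u (_ - x))] at hz hz'
  have hle := isMinOn_iff.1 hz.2 z' hz'.1
  have hle' := isMinOn_iff.1 hz'.2 z hz.1
  have hsum : B (z - z') (z - z') =
      B z (z - x) - B z' (z - x) + (B z' (z' - x) - B z (z' - x)) := by
    simp only [map_sub, LinearMap.sub_apply]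
    ring
  by_contra hne
  have hlt : 0 < B (z - z') (z - z') := hpos _ (sub_ne_zero.2 hne)
  linarith

end VectorSpace

section NormedSpace

variable {E : Type*} [NormedAddCommGroup E] [NormedSpace ℝ E]

lemma IsProperConvex.exists_sub_mul_norm_sub_le [ProperSpace E] {f : E → EReal}
    (hf : IsProperConvex f) (hlsc : LowerSemicontinuous f) {x₀ : E} (hx₀ : f x₀ ≠ ⊤) :
    ∃ a k : ℝ, 0 ≤ k ∧ ∀ u, ((a - k * ‖u - x₀‖ : ℝ) : EReal) ≤ f u := by
  obtain ⟨p, -, hp⟩ := LowerSemicontinuousOn.exists_isMinOn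
    (Metric.nonempty_closedBall.2 zero_le_one) (isCompact_closedBall x₀ 1)
    (hlsc.lowerSemicontinuousOn _)
  rw [isMinOn_iff] at hp
  have hp_ball : ∀ v, f v ≠ ⊤ → ‖v - x₀‖ ≤ 1 → (f p).toReal ≤ (f v).toReal := fun v hv hv1 ↦
    EReal.toReal_le_toReal (hp v (mem_closedBall_iff_norm.2 hv1)) (hf.ne_bot p) hv
  have hpx₀ : (f p).toReal ≤ (f x₀).toReal := hp_ball x₀ hx₀ (by simp)
  have hk : 0 ≤ (f x₀).toReal - (f p).toReal := sub_nonneg.2 hpx₀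
  refine ⟨(f p).toReal, (f x₀).toReal - (f p).toReal, hk, fun u ↦ ?_⟩
  by_cases hu : f u = ⊤
  · exact hu ▸ le_top
  rw [← EReal.coe_toReal hu (hf.ne_bot u), EReal.coe_le_coe_iff]
  rcases le_total ‖u - x₀‖ 1 with hnear | hfar
  · linarith [hp_ball u hu hnear, mul_nonneg hk (norm_nonneg (u - x₀))]
  -- The segment from `x₀` to `u` leaves the unit ball at `x₀ + s⁻¹ (u - x₀)`.
  set s := ‖u - x₀‖
  have hs : 0 < s := one_pos.trans_le hfar
  have hs1 : 0 ≤ 1 - s⁻¹ := sub_nonneg.2 (inv_le_one_of_one_le₀ hfar)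
  have hsum : 1 - s⁻¹ + s⁻¹ = 1 := sub_add_cancel 1 s⁻¹
  have hexit : ‖(1 - s⁻¹) • x₀ + s⁻¹ • u - x₀‖ ≤ 1 := by
    rw [show (1 - s⁻¹) • x₀ + s⁻¹ • u - x₀ = s⁻¹ • (u - x₀) by module, norm_smul, norm_inv,
      Real.norm_of_nonneg hs.le, inv_mul_cancel₀ hs.ne']
  have hexit_le : (f p).toReal ≤ (1 - s⁻¹) * (f x₀).toReal + s⁻¹ * (f u).toReal :=
    (hp_ball _ (hf.convexOn_toReal.1 hx₀ hu hs1 (inv_nonneg.2 hs.le) hsum) hexit).trans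
      (hf.convexOn_toReal.2 hx₀ hu hs1 (inv_nonneg.2 hs.le) hsum)
  have hscaled : s * (f p).toReal ≤ (s - 1) * (f x₀).toReal + (f u).toReal := by
    calc s * (f p).toReal
        ≤ s * ((1 - s⁻¹) * (f x₀).toReal + s⁻¹ * (f u).toReal) := by gcongr
      _ = (s - 1) * (f x₀).toReal + (f u).toReal := by field_simp
  linarith

lemma tendsto_half_mul_bilin_sub_mul_norm_atTop [ProperSpace E] {B : E →L[ℝ] E →L[ℝ] ℝ}
    (hB : IsCoercive B) (x y : E) {k : ℝ} (hk : 0 ≤ k) :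
    Tendsto (fun u ↦ 1 / 2 * B (u - x) (u - x) - k * ‖u - y‖) (cocompact E) atTop := by
  obtain ⟨c, hc, hcB⟩ := hB
  have hnorm : Tendsto (fun u ↦ ‖u - x‖) (cocompact E) atTop := by
    simpa only [dist_eq_norm] using tendsto_dist_right_cocompact_atTop x
  have hquad : Tendsto (fun t : ℝ ↦ t * (c / 2 * t - k) - k * ‖x - y‖) atTop atTop :=
    tendsto_atTop_add_const_right _ _ <| tendsto_id.atTop_mul_atTop₀ <|
      tendsto_atTop_add_const_right _ _ <| tendsto_id.const_mul_atTop (half_pos hc)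
  refine tendsto_atTop_mono (fun u ↦ ?_) (hquad.comp hnorm)
  have htri : k * ‖u - y‖ ≤ k * (‖u - x‖ + ‖x - y‖) := by
    gcongr
    exact norm_sub_le_norm_sub_add_norm_sub u x y
  simp only [Function.comp_apply]
  linarith [hcB (u - x)]

variable [FiniteDimensional ℝ E] {B : LinearMap.BilinForm ℝ E}

lemma isCoercive_toContinuousBilinearMap (hpos : B.toQuadraticMap.PosDef) :
    IsCoercive B.toContinuousBilinearMap := by
  rcases subsingleton_or_nontrivial E with hE | hE
  · exact ⟨1, one_pos, fun v ↦ by simp [Subsingleton.elim v 0]⟩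
  have hcont : Continuous fun v ↦ B.toContinuousBilinearMap v v := by fun_prop
  obtain ⟨s, hs, hmin⟩ := (isCompact_sphere (0 : E) 1).exists_isMinOn
    (NormedSpace.sphere_nonempty.2 zero_le_one) hcont.continuousOn
  refine ⟨B s s, hpos s (ne_zero_of_mem_unit_sphere ⟨s, hs⟩), fun v ↦ ?_⟩
  rcases eq_or_ne v 0 with rfl | hv
  · simp
  have hv' : ‖v‖ ≠ 0 := norm_ne_zero_iff.2 hv
  have hunit : ‖v‖⁻¹ • v ∈ Metric.sphere (0 : E) 1 := by simp [norm_smul, hv]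
  have hle : B s s ≤ ‖v‖⁻¹ * (‖v‖⁻¹ * B v v) := by
    simpa using isMinOn_iff.1 hmin _ hunit
  calc B s s * ‖v‖ * ‖v‖
      ≤ ‖v‖⁻¹ * (‖v‖⁻¹ * B v v) * ‖v‖ * ‖v‖ := by gcongr
    _ = B v v := by field_simp

lemma exists_isProx {f : E → EReal} (hf : IsProperConvex f) (hlsc : LowerSemicontinuous f)
    (hpos : B.toQuadraticMap.PosDef) (x : E) : ∃ z, IsProx f B x z := by
  obtain ⟨x₀, hx₀⟩ := hf.exists_ne_top
  obtain ⟨a, k, hk, hlin⟩ := hf.exists_sub_mul_norm_sub_le hlsc hx₀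
  let q : E → ℝ := fun u ↦ 1 / 2 * B.toContinuousBilinearMap (u - x) (u - x)
  have hq : Continuous q := by fun_prop
  have hgrowth : Tendsto (fun u ↦ q u - k * ‖u - x₀‖) (cocompact E) atTop :=
    tendsto_half_mul_bilin_sub_mul_norm_atTop (isCoercive_toContinuousBilinearMap hpos) x x₀ hk
  refine exists_forall_le_of_lowerSemicontinuous (lowerSemicontinuous_add_coe hlsc hq) x₀ ?_
  filter_upwards [hgrowth.eventually_ge_atTop ((f x₀).toReal + q x₀ - a)] with u hu
  calc f x₀ + (q x₀ : EReal)
      = (((f x₀).toReal + q x₀ : ℝ) : EReal) := by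
        rw [EReal.coe_add, EReal.coe_toReal hx₀ (hf.ne_bot x₀)]
    _ ≤ ((a - k * ‖u - x₀‖ + q u : ℝ) : EReal) := EReal.coe_le_coe_iff.2 (by linarith)
    _ ≤ f u + (q u : EReal) := by
        rw [EReal.coe_add]
        gcongr
        exact hlin u

lemma existsUnique_isProx {f : E → EReal} (hf : IsProperConvex f) (hlsc : LowerSemicontinuous f)
    (hB : B.IsPosSemidef) (hpos : B.toQuadraticMap.PosDef) (x : E) : ∃! z, IsProx f B x z := by
  obtain ⟨z, hz⟩ := exists_isProx hf hlsc hpos x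
  exact ⟨z, hz, fun _ hz' ↦ hz'.unique hf hB hpos hz⟩

end NormedSpace

section Matrix

variable {n m : Type*} [Fintype m]

lemma posDef_add_mul_transpose [Finite n] {D : Matrix n n ℝ} (hD : D.PosDef)
    (U : Matrix n m ℝ) : (D + U * Uᵀ).PosDef := by
  simpa using hD.add_posSemidef (posSemidef_self_mul_conjTranspose U)

variable [Fintype n] [DecidableEq n]

lemma isPosSemidef_toBilin' {M : Matrix n n ℝ} (hM : M.PosSemidef) :
    M.toBilin'.IsPosSemidef where
  eq := (isSymm_toBilin'_iff_isSymm.2 (isHermitian_iff_isSymm.1 hM.isHermitian)).eq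
  nonneg v := by
    simpa [toBilin'_apply'] using hM.dotProduct_mulVec_nonneg v

lemma posDef_toQuadraticMap_toBilin' {M : Matrix n n ℝ} (hM : M.PosDef) :
    M.toBilin'.toQuadraticMap.PosDef := fun v hv ↦ by
  simpa [toBilin'_apply'] using hM.dotProduct_mulVec_pos hv

lemma mulVec_sub_sub_inv_mulVec {R : Type*} [CommRing R] {D : Matrix n n R} (hD : IsUnit D)
    (U : Matrix n m R) {x z : n → R} {γ : m → R} (hγ : Uᵀ *ᵥ (x - z) + γ = 0) :
    D *ᵥ (z - (x - D⁻¹ *ᵥ (U *ᵥ γ))) = (D + U * Uᵀ) *ᵥ (z - x) := by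
  have hγ' : γ = Uᵀ *ᵥ (z - x) := by
    rw [← neg_sub x z, mulVec_neg]
    exact eq_neg_of_add_eq_zero_right hγ
  calc D *ᵥ (z - (x - D⁻¹ *ᵥ (U *ᵥ γ)))
      = D *ᵥ (z - x) + D *ᵥ (D⁻¹ *ᵥ (U *ᵥ γ)) := by
        rw [← mulVec_add, sub_sub_eq_add_sub, sub_add_eq_add_sub]
    _ = D *ᵥ (z - x) + U *ᵥ γ := by
        rw [mulVec_mulVec, mul_nonsing_inv D ((isUnit_iff_isUnit_det D).1 hD), one_mulVec]
    _ = (D + U * Uᵀ) *ᵥ (z - x) := by rw [hγ', mulVec_mulVec, add_mulVec]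

lemma isProx_sub_inv_mulVec_iff {f : (n → ℝ) → EReal} (hf : IsProperConvex f)
    {D : Matrix n n ℝ} (hD : D.PosDef) (U : Matrix n m ℝ) {x z : n → ℝ} {γ : m → ℝ}
    (hγ : Uᵀ *ᵥ (x - z) + γ = 0) :
    IsProx f D.toBilin' (x - D⁻¹ *ᵥ (U *ᵥ γ)) z ↔ IsProx f (D + U * Uᵀ).toBilin' x z :=
  isProx_iff_isProx_of_forall_bilin_eq hf (isPosSemidef_toBilin' hD.posSemidef)
    (isPosSemidef_toBilin' (posDef_add_mul_transpose hD U).posSemidef) fun u ↦ by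
      rw [toBilin'_apply', toBilin'_apply', mulVec_sub_sub_inv_mulVec hD.isUnit U hγ]

end Matrix

lemma isWProx_iff_isProx {N : ℕ} (h : (Fin N → ℝ) → EReal) (lam : ℝ)
    (W : Matrix (Fin N) (Fin N) ℝ) (x z : Fin N → ℝ) :
    IsWProx h lam W x z ↔ IsProx (fun u ↦ (lam : EReal) * h u) W.toBilin' x z := by
  simp only [IsWProx, IsProx, toBilin'_apply']

/-- for `W = D + U Uᵀ` with `D` symmetric positive definite, there is a unique
`γ*` with `Uᵀ (x − prox_{λh}^D (x − D⁻¹ U γ*)) + γ* = 0`, and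
`prox_{λh}^W (x) = prox_{λh}^D (x − D⁻¹ U γ*)`. -/
theorem stmt0 {N r : ℕ} (h : (Fin N → ℝ) → EReal)
    (hproper : ∃ x, h x ≠ ⊤) (hnobot : ∀ x, h x ≠ ⊥)
    (hlsc : LowerSemicontinuous h)
    (hconv : ∀ x y : Fin N → ℝ, ∀ a b : ℝ, 0 ≤ a → 0 ≤ b → a + b = 1 →
      h (a • x + b • y) ≤ (a : EReal) * h x + (b : EReal) * h y)
    (lam : ℝ) (hlam : 0 < lam)
    (D : Matrix (Fin N) (Fin N) ℝ) (hDsymm : D.IsSymm) (hDpos : D.PosDef)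
    (U : Matrix (Fin N) (Fin r) ℝ)
    (W : Matrix (Fin N) (Fin N) ℝ) (hW : W = D + U * Uᵀ)
    (x : Fin N → ℝ) :
    (∃! γ : Fin r → ℝ, ∃ z : Fin N → ℝ,
        IsWProx h lam D (x - D⁻¹.mulVec (U.mulVec γ)) z ∧
          Uᵀ.mulVec (x - z) + γ = 0) ∧
    (∀ γ : Fin r → ℝ, ∀ z : Fin N → ℝ,
        IsWProx h lam D (x - D⁻¹.mulVec (U.mulVec γ)) z →
          Uᵀ.mulVec (x - z) + γ = 0 → IsWProx h lam W x z) := by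
  have hf : IsProperConvex fun u ↦ (lam : EReal) * h u :=
    (isProperConvex_of_le_add hproper hnobot hconv).coe_mul hlam
  have hiff : ∀ γ z, Uᵀ *ᵥ (x - z) + γ = 0 →
      (IsWProx h lam D (x - D⁻¹ *ᵥ (U *ᵥ γ)) z ↔ IsWProx h lam W x z) := fun γ z hγ ↦ by
    rw [isWProx_iff_isProx, isWProx_iff_isProx, hW, isProx_sub_inv_mulVec_iff hf hDpos U hγ]
  have hWpos : W.PosDef := hW ▸ posDef_add_mul_transpose hDpos U
  have hprox : ∃! z, IsWProx h lam W x z := by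
    simpa only [isWProx_iff_isProx] using
      existsUnique_isProx hf (lowerSemicontinuous_coe_mul hlsc hlam)
        (isPosSemidef_toBilin' hWpos.posSemidef) (posDef_toQuadraticMap_toBilin' hWpos) x
  refine ⟨?_, fun γ z hz hγ ↦ (hiff γ z hγ).1 hz⟩
  obtain ⟨z, hz, hunique⟩ := hprox
  have hγ : Uᵀ *ᵥ (x - z) + -(Uᵀ *ᵥ (x - z)) = 0 := add_neg_cancel _
  refine ⟨-(Uᵀ *ᵥ (x - z)), ⟨z, (hiff _ z hγ).2 hz, hγ⟩, ?_⟩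
  rintro γ' ⟨z', hz', hγ'⟩
  obtain rfl : z' = z := hunique z' ((hiff γ' z' hγ').1 hz')
  exact eq_neg_of_add_eq_zero_right hγ'
end

section
/- Let U ∈ ℝ^{N×K} satisfy Uᵀ U = I_K, let Ŝ = diag(ŝ_1, …, ŝ_K) with ŝ_i ≥ ŝ_K ≥ 0 for every i, and let μ > 0. Define P = (1/(ŝ_K + μ)) U (Ŝ + μ I_K) Uᵀ + ( I_N − U Uᵀ ). Then xᵀ P x ≥ xᵀ x for every x ∈ ℝ^N (i.e., P − I_N is positive semidefinite); moreover, if K < N then there exists x ≠ 0 with P x = x, so the smallest eigenvalue of P equals 1. -/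
open Matrix

/-!
Put `w i = (s i - a) / (a + μ)`, where `a` is the smallest of the `s i`. Absorbing `- U * Uᵀ` into
the first summand gives `P = 1 + U * diagonal w * Uᵀ` with `w ≥ 0`, so `P - 1` is positive
semidefinite. Moreover `P` fixes the kernel of `Uᵀ`, which is nontrivial when `U` has fewer columns
than rows, so the lower bound `1` is attained.
-/

lemma exists_ne_zero_mulVec_eq_zero_of_card_lt {m k F : Type*} [Fintype m] [Fintype k]
    [Field F] (A : Matrix k m F) (hcard : Fintype.card k < Fintype.card m) :
    ∃ x : m → F, x ≠ 0 ∧ A *ᵥ x = 0 := by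
  have hker : A.mulVecLin.ker ≠ ⊥ :=
    LinearMap.ker_ne_bot_of_finrank_lt (by simpa only [Module.finrank_fintype_fun_eq_card])
  obtain ⟨x, hx, hx0⟩ := (Submodule.ne_bot_iff _).1 hker
  exact ⟨x, hx0, LinearMap.mem_ker.1 hx⟩

section QuadraticForm

variable {m : Type*} [Fintype m]

lemma exists_smul_dotProduct_smul_eq_one {x : m → ℝ} (hx : x ≠ 0) :
    ∃ c : ℝ, (c • x) ⬝ᵥ (c • x) = 1 := by
  have hpos : 0 < x ⬝ᵥ x := dotProduct_self_star_pos_iff.2 hx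
  refine ⟨(√(x ⬝ᵥ x))⁻¹, ?_⟩
  rw [smul_dotProduct, dotProduct_smul, smul_eq_mul, smul_eq_mul, ← mul_assoc, ← mul_inv,
    Real.mul_self_sqrt hpos.le, inv_mul_cancel₀ hpos.ne']

lemma isLeast_unit_dotProduct_mulVec {A : Matrix m m ℝ} {r : ℝ}
    (hbound : ∀ x, r * (x ⬝ᵥ x) ≤ x ⬝ᵥ A *ᵥ x) {v : m → ℝ} (hv0 : v ≠ 0) (hv : A *ᵥ v = r • v) :
    IsLeast {t : ℝ | ∃ x : m → ℝ, x ⬝ᵥ x = 1 ∧ t = x ⬝ᵥ A *ᵥ x} r := by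
  constructor
  · obtain ⟨c, hc⟩ := exists_smul_dotProduct_smul_eq_one hv0
    refine ⟨c • v, hc, ?_⟩
    rw [mulVec_smul, hv, smul_comm, dotProduct_smul, hc, smul_eq_mul, mul_one]
  · rintro _ ⟨x, hx, rfl⟩
    simpa only [hx, mul_one] using hbound x

lemma dotProduct_self_le_of_posSemidef_sub_one [DecidableEq m] {A : Matrix m m ℝ}
    (hA : (A - 1).PosSemidef) (x : m → ℝ) : x ⬝ᵥ x ≤ x ⬝ᵥ A *ᵥ x := by
  have hnonneg : 0 ≤ x ⬝ᵥ (A - 1) *ᵥ x := hA.dotProduct_mulVec_nonneg x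
  rwa [sub_mulVec, one_mulVec, dotProduct_sub, sub_nonneg] at hnonneg

end QuadraticForm

section Preconditioner

variable {m k F : Type*} [DecidableEq m] [Fintype k] [DecidableEq k] [Field F]

/-- The Nyström preconditioner built from approximate eigenvectors (the columns of `U`) and
eigenvalues `s`, with regularization `μ`. The normalizing value `a` is a free parameter here; the
paper takes the smallest of the `s i`. -/
def nystromPrecond (U : Matrix m k F) (s : k → F) (a μ : F) : Matrix m m F :=
  (1 / (a + μ)) • (U * (diagonal s + μ • 1) * Uᵀ) + (1 - U * Uᵀ)

namespace nystromPrecond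

lemma eq_one_add (U : Matrix m k F) (s : k → F) {a μ : F} (haμ : a + μ ≠ 0) :
    nystromPrecond U s a μ = 1 + U * diagonal (fun i ↦ (s i - a) / (a + μ)) * Uᵀ := by
  have hdiag : diagonal (fun i ↦ (s i - a) / (a + μ))
      = (1 / (a + μ)) • (diagonal s + μ • 1) - 1 := by
    rw [smul_one_eq_diagonal, diagonal_add, ← diagonal_smul, ← diagonal_one, diagonal_sub]
    congr 1
    funext i
    simp only [Pi.smul_apply, smul_eq_mul]
    field_simp
    ring
  rw [nystromPrecond, hdiag, Matrix.mul_sub, Matrix.sub_mul, Matrix.mul_smul, Matrix.smul_mul,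
    Matrix.mul_one]
  abel

lemma posSemidef_sub_one [Finite m] (U : Matrix m k ℝ) {s : k → ℝ} {a μ : ℝ}
    (has : ∀ i, a ≤ s i) (haμ : 0 < a + μ) : (nystromPrecond U s a μ - 1).PosSemidef := by
  have hweights : 0 ≤ fun i ↦ (s i - a) / (a + μ) :=
    fun i ↦ div_nonneg (sub_nonneg.2 (has i)) haμ.le
  rw [eq_one_add U s haμ.ne', add_sub_cancel_left]
  exact (PosSemidef.diagonal hweights).mul_mul_conjTranspose_same U

variable [Fintype m]

lemma mulVec_eq_self (U : Matrix m k F) (s : k → F) (a μ : F) {x : m → F} (hx : Uᵀ *ᵥ x = 0) :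
    nystromPrecond U s a μ *ᵥ x = x := by
  simp only [nystromPrecond, add_mulVec, sub_mulVec, smul_mulVec, one_mulVec, ← mulVec_mulVec, hx,
    mulVec_zero, smul_zero, zero_add, sub_zero]

lemma exists_ne_zero_mulVec_eq_self (U : Matrix m k F) (s : k → F) (a μ : F)
    (hcard : Fintype.card k < Fintype.card m) :
    ∃ x : m → F, x ≠ 0 ∧ nystromPrecond U s a μ *ᵥ x = x := by
  obtain ⟨x, hx0, hx⟩ := exists_ne_zero_mulVec_eq_zero_of_card_lt Uᵀ hcard
  exact ⟨x, hx0, mulVec_eq_self U s a μ hx⟩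

end nystromPrecond

theorem stmt8_general [Fintype m] (U : Matrix m k ℝ) {s : k → ℝ} {a μ : ℝ} (has : ∀ i, a ≤ s i)
    (haμ : 0 < a + μ) :
    (∀ x : m → ℝ, x ⬝ᵥ x ≤ x ⬝ᵥ nystromPrecond U s a μ *ᵥ x) ∧
    (Fintype.card k < Fintype.card m →
      ∃ x : m → ℝ, x ≠ 0 ∧ nystromPrecond U s a μ *ᵥ x = x) ∧
    (Fintype.card k < Fintype.card m →
      IsLeast {t : ℝ | ∃ x : m → ℝ, x ⬝ᵥ x = 1 ∧ t = x ⬝ᵥ nystromPrecond U s a μ *ᵥ x} 1) := by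
  have hbound := dotProduct_self_le_of_posSemidef_sub_one
    (nystromPrecond.posSemidef_sub_one U has haμ)
  have hfixed := nystromPrecond.exists_ne_zero_mulVec_eq_self U s a μ
  refine ⟨hbound, hfixed, fun hcard ↦ ?_⟩
  obtain ⟨v, hv0, hv⟩ := hfixed hcard
  exact isLeast_unit_dotProduct_mulVec (by simpa only [one_mul] using hbound) hv0
    (by rwa [one_smul])

end Preconditioner

/-- with `Uᵀ U = I`, `ŝ_i ≥ ŝ_K ≥ 0` and `μ > 0`, the randomized Nyström
preconditioner `P = (1/(ŝ_K+μ)) U (Ŝ+μI) Uᵀ + (I − U Uᵀ)` satisfies `xᵀ P x ≥ xᵀ x`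
for all `x` (i.e. `P − I` is positive semidefinite); moreover if the sketch size `K+1`
is less than `N` then some `x ≠ 0` satisfies `P x = x`, so the smallest eigenvalue of
`P` (the minimum of `xᵀ P x` over unit vectors) equals `1`. -/
theorem stmt8 {N K : ℕ} (U : Matrix (Fin N) (Fin (K + 1)) ℝ) (hU : Uᵀ * U = 1)
    (s : Fin (K + 1) → ℝ) (hmono : ∀ i, s (Fin.last K) ≤ s i)
    (hsK : 0 ≤ s (Fin.last K)) (μ : ℝ) (hμ : 0 < μ) :
    let sK : ℝ := s (Fin.last K)
    let S : Matrix (Fin (K + 1)) (Fin (K + 1)) ℝ := Matrix.diagonal s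
    let P : Matrix (Fin N) (Fin N) ℝ :=
      (1 / (sK + μ)) • (U * (S + μ • 1) * Uᵀ) + (1 - U * Uᵀ)
    (∀ x : Fin N → ℝ, x ⬝ᵥ x ≤ x ⬝ᵥ P.mulVec x) ∧
    (K + 1 < N → ∃ x : Fin N → ℝ, x ≠ 0 ∧ P.mulVec x = x) ∧
    (K + 1 < N →
      IsLeast {t : ℝ | ∃ x : Fin N → ℝ, x ⬝ᵥ x = 1 ∧ t = x ⬝ᵥ P.mulVec x} 1) := by
  simpa only [Fintype.card_fin, nystromPrecond] using
    stmt8_general U hmono (add_pos_of_nonneg_of_pos hsK hμ)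
end

section
/- Let C ⊆ ℝ^N be nonempty, closed and convex, let P ∈ ℝ^{N×N} be symmetric positive definite, let L ∈ ℝ^{L'×N}, s ∈ ℝ^N, and λ̄ > 0. For Q ∈ ℝ^{L'} define m(Q) = s − λ̄ P^{-1} Lᵀ Q, let x*(Q) be the P-weighted projection of m(Q) onto C, and define d(Q) = ‖m(Q)‖_P² − ‖x*(Q) − m(Q)‖_P². Then d is differentiable at every Q ∈ ℝ^{L'} with gradient ∇d(Q) = −2 λ̄ L x*(Q). -/
open Matrix

/-!
In an inner product space, the nearest point `x` of a set to `m` maximizes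
`y ↦ ‖m‖² - ‖y - m‖² = 2 ⟪y, m⟫ - ‖y‖²`, so this maximum is a supremum of affine functions of `m`,
and `2 x` is a subgradient at `m`. Comparing the subgradient inequalities at `m` and `m'` bounds the
linearization error by `2 ⟪x' - x, m' - m⟫`. For a convex set the nearest point is a nonexpansive
function of `m`, so this is at most `2 ‖m' - m‖²`, and `2 x` is in fact the gradient. The weight `P`
enters by writing `P = Bᵀ B`, which turns the `P`-norm of `v` into the Euclidean norm of `B v`; then
the chain rule for `Q ↦ m(Q)` replaces `2 x` by `-2 λ̄ L P⁻¹ P x = -2 λ̄ L x`.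
-/

open scoped RealInnerProductSpace Topology

section NearestPoint

variable {E : Type*} [NormedAddCommGroup E] [InnerProductSpace ℝ E]

/-- `x` is a nearest point of `C` to `m`; for `C` convex this says that `x` is the projection of `m`
onto `C`. A predicate, since `m` may have no nearest point in `C`. -/
structure IsNearestPoint (C : Set E) (m x : E) : Prop where
  mem : x ∈ C
  isMinOn : IsMinOn (fun y ↦ ‖m - y‖) C x

namespace IsNearestPoint

variable {C : Set E} {m m' x x' : E}

theorem inner_sub_sub_nonpos (h : IsNearestPoint C m x) (hC : Convex ℝ C) {y : E} (hy : y ∈ C) :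
    ⟪m - x, y - x⟫ ≤ 0 :=
  (norm_eq_iInf_iff_real_inner_le_zero hC h.mem).1 (h.isMinOn.iInf_eq h.mem).symm y hy

theorem norm_sub_sq_le_inner (h : IsNearestPoint C m x) (h' : IsNearestPoint C m' x')
    (hC : Convex ℝ C) : ‖x' - x‖ ^ 2 ≤ ⟪x' - x, m' - m⟫ := by
  have hx := h.inner_sub_sub_nonpos hC h'.mem
  have hx' := h'.inner_sub_sub_nonpos hC h.mem
  have key : ⟪x' - x, m' - m⟫ - ‖x' - x‖ ^ 2 = -⟪m - x, x' - x⟫ - ⟪m' - x', x - x'⟫ := by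
    rw [← real_inner_self_eq_norm_sq]
    simp only [inner_sub_left, inner_sub_right, real_inner_comm]
    ring
  linarith

theorem norm_sub_le (h : IsNearestPoint C m x) (h' : IsNearestPoint C m' x') (hC : Convex ℝ C) :
    ‖x' - x‖ ≤ ‖m' - m‖ := by
  have hsq := (h.norm_sub_sq_le_inner h' hC).trans (real_inner_le_norm _ _)
  nlinarith [norm_nonneg (x' - x), norm_nonneg (m' - m)]

theorem two_mul_inner_le (h' : IsNearestPoint C m' x') (hx : x ∈ C) :
    2 * ⟪x, m' - m⟫ ≤ (‖m'‖ ^ 2 - ‖x' - m'‖ ^ 2) - (‖m‖ ^ 2 - ‖x - m‖ ^ 2) := by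
  have hmin : ‖m' - x'‖ ^ 2 ≤ ‖m' - x‖ ^ 2 := by gcongr; exact h'.isMinOn hx
  have hexpand := norm_sub_sq_real m' x
  have hexpand' := norm_sub_sq_real x m
  rw [norm_sub_rev x' m', inner_sub_right]
  rw [real_inner_comm] at hexpand
  linarith

theorem abs_sub_sub_two_mul_inner_le (h : IsNearestPoint C m x) (h' : IsNearestPoint C m' x')
    (hC : Convex ℝ C) :
    |(‖m'‖ ^ 2 - ‖x' - m'‖ ^ 2) - (‖m‖ ^ 2 - ‖x - m‖ ^ 2) - 2 * ⟪x, m' - m⟫|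
      ≤ 2 * ‖m' - m‖ ^ 2 := by
  have hlower := h'.two_mul_inner_le (m := m) h.mem
  have hupper := h.two_mul_inner_le (m := m') h'.mem
  have hcross : ⟪x' - x, m' - m⟫ ≤ ‖m' - m‖ ^ 2 :=
    calc ⟪x' - x, m' - m⟫ ≤ ‖x' - x‖ * ‖m' - m‖ := real_inner_le_norm _ _
      _ ≤ ‖m' - m‖ * ‖m' - m‖ := by gcongr; exact h.norm_sub_le h' hC
      _ = ‖m' - m‖ ^ 2 := (sq _).symm
  rw [abs_of_nonneg (sub_nonneg.2 hlower)]
  simp only [inner_sub_left, inner_sub_right] at hupper hcross ⊢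
  linarith

end IsNearestPoint

theorem hasFDerivAt_norm_sq_sub_norm_nearestPoint_sub_sq {F : Type*} [NormedAddCommGroup F]
    [NormedSpace ℝ F] {C : Set E} (hC : Convex ℝ C) {m x : F → E} {m' : F →L[ℝ] E} {Q : F}
    (hm : HasFDerivAt m m' Q) (hx : ∀ R, IsNearestPoint C (m R) (x R)) :
    HasFDerivAt (fun R ↦ ‖m R‖ ^ 2 - ‖x R - m R‖ ^ 2) ((2 : ℝ) • (innerSL ℝ (x Q)).comp m') Q := by
  set d : F → ℝ := fun R ↦ ‖m R‖ ^ 2 - ‖x R - m R‖ ^ 2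
  have herror : (fun R ↦ d R - d Q - 2 * ⟪x Q, m R - m Q⟫) =O[𝓝 Q] fun R ↦ ‖R - Q‖ ^ 2 :=
    calc (fun R ↦ d R - d Q - 2 * ⟪x Q, m R - m Q⟫)
        =O[𝓝 Q] fun R ↦ ‖m R - m Q‖ ^ 2 := by
          refine .of_bound 2 (.of_forall fun R ↦ ?_)
          simpa using (hx Q).abs_sub_sub_two_mul_inner_le (hx R) hC
      _ =O[𝓝 Q] fun R ↦ ‖R - Q‖ ^ 2 := hm.isBigO_sub.norm_norm.pow 2
  have hlinear : HasFDerivAt (fun R ↦ 2 * ⟪x Q, m R - m Q⟫)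
      ((2 : ℝ) • (innerSL ℝ (x Q)).comp m') Q :=
    ((innerSL ℝ (x Q)).hasFDerivAt.comp Q (hm.sub_const (m Q))).const_mul 2
  simpa using ((herror.hasFDerivAt one_lt_two).add hlinear).add_const (d Q)

end NearestPoint

section Weighted

variable {n : Type*} [Fintype n] {P : Matrix n n ℝ}

open scoped MatrixOrder in
theorem exists_linearMap_inner_eq_dotProduct_mulVec (hP : P.PosSemidef) :
    ∃ T : (n → ℝ) →ₗ[ℝ] EuclideanSpace ℝ n, ∀ u v, ⟪T u, T v⟫ = u ⬝ᵥ P *ᵥ v := by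
  classical
  obtain ⟨B, rfl⟩ := CStarAlgebra.nonneg_iff_eq_star_mul_self.mp hP.nonneg
  refine ⟨(WithLp.linearEquiv 2 ℝ (n → ℝ)).symm ∘ₗ B.mulVecLin, fun u v ↦ ?_⟩
  change B *ᵥ v ⬝ᵥ B *ᵥ u = _
  rw [star_eq_conjTranspose, conjTranspose_eq_transpose_of_trivial, ← mulVec_mulVec,
    dotProduct_mulVec u, vecMul_transpose, dotProduct_comm]

theorem hasFDerivAt_weighted_sq_sub_weighted_proj_sub_sq {F : Type*} [NormedAddCommGroup F]
    [NormedSpace ℝ F] (hP : P.PosSemidef) {C : Set (n → ℝ)} (hC : Convex ℝ C)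
    {m x : F → n → ℝ} {m' : F →L[ℝ] n → ℝ} {Q : F} (hm : HasFDerivAt m m' Q)
    (hx : ∀ R, x R ∈ C ∧ ∀ y ∈ C,
      (x R - m R) ⬝ᵥ P *ᵥ (x R - m R) ≤ (y - m R) ⬝ᵥ P *ᵥ (y - m R))
    {φ : F →L[ℝ] ℝ} (hφ : ∀ h, φ h = 2 * (x Q ⬝ᵥ P *ᵥ m' h)) :
    HasFDerivAt (fun R ↦ m R ⬝ᵥ P *ᵥ m R - (x R - m R) ⬝ᵥ P *ᵥ (x R - m R)) φ Q := by
  obtain ⟨T, hT⟩ := exists_linearMap_inner_eq_dotProduct_mulVec hP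
  have hTsq (v : n → ℝ) : ‖T v‖ ^ 2 = v ⬝ᵥ P *ᵥ v := by rw [← real_inner_self_eq_norm_sq, hT]
  have hTx (R : F) : IsNearestPoint (T '' C) (T (m R)) (T (x R)) := by
    refine ⟨Set.mem_image_of_mem T (hx R).1, ?_⟩
    rintro _ ⟨y, hy, rfl⟩
    change ‖T (m R) - T (x R)‖ ≤ ‖T (m R) - T y‖
    rw [norm_sub_rev, norm_sub_rev (T (m R)), ← map_sub, ← map_sub,
      ← sq_le_sq₀ (norm_nonneg _) (norm_nonneg _), hTsq, hTsq]
    exact (hx R).2 y hy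
  have hTm : HasFDerivAt (fun R ↦ T (m R)) (T.toContinuousLinearMap.comp m') Q :=
    T.toContinuousLinearMap.hasFDerivAt.comp Q hm
  convert hasFDerivAt_norm_sq_sub_norm_nearestPoint_sub_sq (hC.linear_image T) hTm hTx using 1
  · simp only [← map_sub, hTsq]
  · ext h
    simp [hφ, hT]

variable {k : Type*} [Fintype k] [DecidableEq n]

theorem dotProduct_mulVec_inv_mulVec_transpose_mulVec {R : Type*} [CommRing R]
    {P : Matrix n n R} (hP : IsUnit P) (L : Matrix k n R) (x : n → R) (h : k → R) :
    x ⬝ᵥ P *ᵥ (P⁻¹ *ᵥ (Lᵀ *ᵥ h)) = L *ᵥ x ⬝ᵥ h := by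
  rw [mulVec_mulVec, mul_nonsing_inv _ ((isUnit_iff_isUnit_det P).1 hP), one_mulVec,
    dotProduct_mulVec, vecMul_transpose]

theorem stmt11_general {C : Set (n → ℝ)} (hC : Convex ℝ C) (hP : P.PosDef)
    (L : Matrix k n ℝ) (s : n → ℝ) (lb : ℝ) {m : EuclideanSpace ℝ k → n → ℝ}
    (hm : ∀ Q, m Q = s - lb • P⁻¹ *ᵥ (Lᵀ *ᵥ Q.ofLp)) {x : EuclideanSpace ℝ k → n → ℝ}
    (hx : ∀ Q, x Q ∈ C ∧ ∀ y ∈ C,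
      (x Q - m Q) ⬝ᵥ P *ᵥ (x Q - m Q) ≤ (y - m Q) ⬝ᵥ P *ᵥ (y - m Q))
    (Q : EuclideanSpace ℝ k) :
    HasGradientAt (fun R ↦ m R ⬝ᵥ P *ᵥ m R - (x R - m R) ⬝ᵥ P *ᵥ (x R - m R))
      (WithLp.toLp 2 (-(2 * lb) • L *ᵥ x Q)) Q := by
  let A : EuclideanSpace ℝ k →ₗ[ℝ] n → ℝ :=
    lb • P⁻¹.mulVecLin ∘ₗ Lᵀ.mulVecLin ∘ₗ (WithLp.linearEquiv 2 ℝ (k → ℝ)).toLinearMap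
  have hm' : HasFDerivAt m (-A.toContinuousLinearMap) Q := by
    rw [funext hm]
    exact A.toContinuousLinearMap.hasFDerivAt.const_sub s
  refine hasFDerivAt_weighted_sq_sub_weighted_proj_sub_sq hP.posSemidef hC hm' hx fun h ↦ ?_
  calc ⟪WithLp.toLp 2 (-(2 * lb) • L *ᵥ x Q), h⟫
      = -(2 * lb) * (L *ᵥ x Q ⬝ᵥ h.ofLp) := by
        simp [EuclideanSpace.inner_eq_star_dotProduct, dotProduct_comm]
    _ = 2 * (x Q ⬝ᵥ P *ᵥ -(lb • P⁻¹ *ᵥ (Lᵀ *ᵥ h.ofLp))) := by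
        rw [mulVec_neg, mulVec_smul, dotProduct_neg, dotProduct_smul,
          dotProduct_mulVec_inv_mulVec_transpose_mulVec hP.isUnit, smul_eq_mul]
        ring

end Weighted

/-- differentiability of the dual objective. With `m(Q) = s − λ̄ P⁻¹ Lᵀ Q`,
`x*(Q)` the `P`-weighted projection of `m(Q)` onto the nonempty closed convex set `C`,
and `d(Q) = ‖m(Q)‖_P² − ‖x*(Q) − m(Q)‖_P²`, the function `d` is differentiable everywhere
with gradient `∇d(Q) = −2 λ̄ L x*(Q)` (gradient w.r.t. the Euclidean inner product). -/
theorem stmt11 {N K : ℕ} (C : Set (Fin N → ℝ)) (hCne : C.Nonempty) (hCcl : IsClosed C)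
    (hCco : Convex ℝ C)
    (P : Matrix (Fin N) (Fin N) ℝ) (hPsymm : P.IsSymm) (hPpos : P.PosDef)
    (L : Matrix (Fin K) (Fin N) ℝ) (s : Fin N → ℝ) (lb : ℝ) (hlb : 0 < lb)
    (m : EuclideanSpace ℝ (Fin K) → Fin N → ℝ)
    (hm : ∀ Q, m Q = s - lb • P⁻¹.mulVec (Lᵀ.mulVec (WithLp.equiv 2 (Fin K → ℝ) Q)))
    (xs : EuclideanSpace ℝ (Fin K) → Fin N → ℝ)
    (hxs : ∀ Q, xs Q ∈ C ∧ ∀ x ∈ C,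
      (xs Q - m Q) ⬝ᵥ P.mulVec (xs Q - m Q) ≤ (x - m Q) ⬝ᵥ P.mulVec (x - m Q))
    (dfun : EuclideanSpace ℝ (Fin K) → ℝ)
    (hd : ∀ Q, dfun Q =
      m Q ⬝ᵥ P.mulVec (m Q) - (xs Q - m Q) ⬝ᵥ P.mulVec (xs Q - m Q)) :
    ∀ Q, HasGradientAt dfun
      ((WithLp.equiv 2 (Fin K → ℝ)).symm ((-(2 * lb)) • L.mulVec (xs Q))) Q := by
  rw [funext hd]
  exact stmt11_general hCco hPpos L s lb hm hxs
end

section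
/- Let C ⊆ ℝ^N be nonempty, closed and convex, let P ∈ ℝ^{N×N} be symmetric positive definite, let L ∈ ℝ^{L'×N}, s ∈ ℝ^N, and λ̄ > 0. For Q ∈ ℝ^{L'} define m(Q) = s − λ̄ P^{-1} Lᵀ Q, let x*(Q) be the P-weighted projection of m(Q) onto C, and define d(Q) = ‖m(Q)‖_P² − ‖x*(Q) − m(Q)‖_P². Then d is a convex function of Q on ℝ^{L'}. -/
/-!
Polarization gives `‖m‖² − ‖x − m‖² = polar x m − ‖x‖²` for any quadratic map in place of `‖·‖²`,
which for fixed `x` is affine in `m`. Since `x*(Q)` minimizes the subtracted term, `d(Q)` is the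
maximum over `x ∈ C` of these functions, each of them affine in `Q`.
-/

open Matrix

section Convexity

variable {𝕜 E β : Type*} [Semiring 𝕜] [PartialOrder 𝕜] [AddCommMonoid E] [SMul 𝕜 E]
  [AddCommMonoid β] [PartialOrder β] [IsOrderedAddMonoid β] [SMul 𝕜 β] [PosSMulMono 𝕜 β]
  {s : Set E} {f : E → β}

theorem convexOn_of_exists_convexOn_minorant (hs : Convex 𝕜 s)
    (hf : ∀ x ∈ s, ∃ g : E → β, ConvexOn 𝕜 s g ∧ (∀ y ∈ s, g y ≤ f y) ∧ g x = f x) :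
    ConvexOn 𝕜 s f := by
  refine ⟨hs, fun x hx y hy a b ha hb hab ↦ ?_⟩
  obtain ⟨g, hg, hgf, hgz⟩ := hf (a • x + b • y) (hs hx hy ha hb hab)
  calc
    f (a • x + b • y) = g (a • x + b • y) := hgz.symm
    _ ≤ a • g x + b • g y := hg.2 hx hy ha hb hab
    _ ≤ a • f x + b • f y :=
      add_le_add (smul_le_smul_of_nonneg_left (hgf x hx) ha)
        (smul_le_smul_of_nonneg_left (hgf y hy) hb)

end Convexity

section QuadraticMap

variable {R M N : Type*} [CommRing R] [AddCommGroup M] [Module R M] [AddCommGroup N] [Module R N]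

theorem quadraticMap_sub_map_sub (q : QuadraticMap R M N) (x m : M) :
    q m - q (x - m) = QuadraticMap.polar q x m - q x := by
  rw [sub_eq_add_neg x m, QuadraticMap.map_add q, QuadraticMap.map_neg,
    QuadraticMap.polar_neg_right]
  abel

variable [PartialOrder R] [PartialOrder N] [IsOrderedAddMonoid N]

theorem convexOn_quadraticMap_sub_map_sub (q : QuadraticMap R M N) (x : M) :
    ConvexOn R Set.univ fun m ↦ q m - q (x - m) := by
  simp only [quadraticMap_sub_map_sub, sub_eq_add_neg (QuadraticMap.polar _ _ _)]
  exact ((q.polarBilin x).convexOn convex_univ).add_const (-q x)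

end QuadraticMap

theorem toQuadraticForm'_apply {n R : Type*} [Fintype n] [DecidableEq n] [CommRing R]
    (P : Matrix n n R) (v : n → R) : P.toQuadraticForm' v = v ⬝ᵥ P *ᵥ v :=
  toLinearMap₂'_apply' P v v

theorem stmt12_general {𝕜 E F β : Type*} [Field 𝕜] [LinearOrder 𝕜]
    [AddCommGroup E] [Module 𝕜 E] [AddCommGroup F] [Module 𝕜 F]
    [AddCommGroup β] [PartialOrder β] [IsOrderedAddMonoid β] [Module 𝕜 β] [PosSMulMono 𝕜 β]
    (q : QuadraticMap 𝕜 E β) (C : Set E) {D : Set F} (hD : Convex 𝕜 D) (m : F →ᵃ[𝕜] E)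
    (p : F → E) (hpC : ∀ u ∈ D, p u ∈ C)
    (hp : ∀ u ∈ D, IsMinOn (fun x ↦ q (x - m u)) C (p u)) :
    ConvexOn 𝕜 D fun u ↦ q (m u) - q (p u - m u) := by
  refine convexOn_of_exists_convexOn_minorant hD fun u hu ↦
    ⟨fun v ↦ q (m v) - q (p u - m v), ?_, fun v hv ↦ ?_, rfl⟩
  · exact ((convexOn_quadraticMap_sub_map_sub q (p u)).comp_affineMap m).subset
      (Set.subset_univ D) hD
  · exact sub_le_sub_left (hp v hv (hpC u hu)) (q (m v))

/-- convexity of the dual objective. With `m(Q) = s − λ̄ P⁻¹ Lᵀ Q`,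
`x*(Q)` the `P`-weighted projection of `m(Q)` onto the nonempty closed convex set `C`,
and `d(Q) = ‖m(Q)‖_P² − ‖x*(Q) − m(Q)‖_P²`, the function `d` is convex on `ℝ^K`. -/
theorem stmt12 {N K : ℕ} (C : Set (Fin N → ℝ)) (hCne : C.Nonempty) (hCcl : IsClosed C)
    (hCco : Convex ℝ C)
    (P : Matrix (Fin N) (Fin N) ℝ) (hPsymm : P.IsSymm) (hPpos : P.PosDef)
    (L : Matrix (Fin K) (Fin N) ℝ) (s : Fin N → ℝ) (lb : ℝ) (hlb : 0 < lb)
    (m : (Fin K → ℝ) → Fin N → ℝ)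
    (hm : ∀ Q, m Q = s - lb • P⁻¹.mulVec (Lᵀ.mulVec Q))
    (xs : (Fin K → ℝ) → Fin N → ℝ)
    (hxs : ∀ Q, xs Q ∈ C ∧ ∀ x ∈ C,
      (xs Q - m Q) ⬝ᵥ P.mulVec (xs Q - m Q) ≤ (x - m Q) ⬝ᵥ P.mulVec (x - m Q))
    (dfun : (Fin K → ℝ) → ℝ)
    (hd : ∀ Q, dfun Q =
      m Q ⬝ᵥ P.mulVec (m Q) - (xs Q - m Q) ⬝ᵥ P.mulVec (xs Q - m Q)) :
    ConvexOn ℝ Set.univ dfun := by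
  let mAff : (Fin K → ℝ) →ᵃ[ℝ] Fin N → ℝ :=
    AffineMap.const ℝ _ s - (lb • P⁻¹.mulVecLin ∘ₗ Lᵀ.mulVecLin).toAffineMap
  obtain rfl : m = mAff := funext hm
  simp only [← toQuadraticForm'_apply] at hxs hd
  exact funext hd ▸ stmt12_general P.toQuadraticForm' C convex_univ mAff xs
    (fun Q _ ↦ (hxs Q).1) fun Q _ ↦ isMinOn_iff.2 (hxs Q).2
end

section
/- Let C ⊆ ℝ^N be nonempty, closed and convex, let P ∈ ℝ^{N×N} be symmetric positive definite, let L ∈ ℝ^{L'×N} whose output coordinates are partitioned into G groups of π entries, let s ∈ ℝ^N, λ̄ > 0, φ ∈ [1, ∞] with conjugate exponent ψ, and B = { Q = (q_1, …, q_G) : ‖q_l‖_ψ ≤ 1 for all l }. Suppose Q* ∈ B maximizes the dual function Q ↦ min_{x ∈ C} [ (1/2)‖x − s‖_P² + λ̄ ⟨Q, Lx⟩ ] over B. Then the P-weighted projection x* of s − λ̄ P^{-1} Lᵀ Q* onto C is the unique minimizer over C of the primal objective x ↦ (1/2)‖x − s‖_P² + λ̄ ‖Lx‖_{1,φ}. 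-/
open Matrix
open scoped ENNReal

/-!
Write `h(x, Q) = (1/2)‖x - s‖_P² + λ̄⟨Q, Lx⟩`. Completing the square, `x*` minimizes `h(·, Q*)`
over `C`, and the variational inequality for projections upgrades this to the quadratic growth
`h(x, Q*) ≥ h(x*, Q*) + (1/2)‖x - x*‖_P²` on `C`.

No minimax theorem is needed to see that `Q*` maximizes `h(x*, ·)` over `B`: by quadratic growth,
moving a fraction `t` of the way from `Q*` to `Q ∈ B` changes the dual value by at least
`t λ̄⟨Q - Q*, Lx*⟩ - O(t²)`, so a positive slope would contradict the maximality of `Q*`.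
Since `ℓ_φ`-`ℓ_ψ` duality makes `‖·‖_{1,φ}` the support function of `B`, it follows that the primal
objective `F` satisfies `F(x) ≥ h(x, Q*) ≥ h(x*, Q*) + (1/2)‖x - x*‖_P² = F(x*) + (1/2)‖x - x*‖_P²`.
-/

section QuadraticLagrangian

open LinearMap (BilinForm)

lemma nonneg_of_forall_nonneg_add_mul {u v : ℝ} (h : ∀ t ∈ Set.Ioc (0 : ℝ) 1, 0 ≤ u + t * v) :
    0 ≤ u := by
  have hlim : Filter.Tendsto (fun t : ℝ => u + t * v) (nhdsWithin 0 (Set.Ioi 0)) (nhds u) := by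
    have hcont : Continuous fun t : ℝ => u + t * v := by fun_prop
    simpa using (hcont.tendsto 0).mono_left nhdsWithin_le_nhds
  exact ge_of_tendsto hlim (Filter.eventually_of_mem (Ioc_mem_nhdsGT one_pos) h)

variable {E V : Type*} [AddCommGroup E] [Module ℝ E] [AddCommGroup V] [Module ℝ V]
  {b : BilinForm ℝ E} {A : V →ₗ[ℝ] E} {C : Set E} {B : Set V} {s m x y : E} {Q : V}

lemma bilin_add_smul_self (hb : b.IsSymm) (u v : E) (t : ℝ) :
    b (u + t • v) (u + t • v) = b u u + 2 * t * b u v + t ^ 2 * b v v := by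
  simp only [map_add, map_smul, LinearMap.add_apply, LinearMap.smul_apply, smul_eq_mul, hb.eq v u]
  ring

lemma bilin_nonneg_of_isMinOn (hb : b.IsSymm) (hC : Convex ℝ C) (hy : y ∈ C)
    (hmin : IsMinOn (fun z => b (z - m) (z - m)) C y) (hx : x ∈ C) :
    0 ≤ b (y - m) (x - y) := by
  suffices h : 0 ≤ 2 * b (y - m) (x - y) by linarith
  refine nonneg_of_forall_nonneg_add_mul (v := b (x - y) (x - y)) fun t ht => ?_
  have hle : b (y - m) (y - m) ≤ b (y - m + t • (x - y)) (y - m + t • (x - y)) := by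
    rw [← add_sub_right_comm]
    exact hmin (hC.add_smul_sub_mem hy hx ⟨ht.1.le, ht.2⟩)
  rw [bilin_add_smul_self hb] at hle
  exact nonneg_of_mul_nonneg_right (by linarith) ht.1

lemma bilin_add_bilin_le_of_isMinOn (hb : b.IsSymm) (hC : Convex ℝ C) (hy : y ∈ C)
    (hmin : IsMinOn (fun z => b (z - m) (z - m)) C y) (hx : x ∈ C) :
    b (y - m) (y - m) + b (x - y) (x - y) ≤ b (x - m) (x - m) := by
  have hexpand := bilin_add_smul_self hb (y - m) (x - y) 1
  rw [one_smul, sub_add_sub_cancel'] at hexpand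
  linarith [bilin_nonneg_of_isMinOn hb hC hy hmin hx]

/-- The Lagrangian `h(x, Q) = (1/2)‖x - s‖² + ⟨Q, x⟩` for the squared norm `‖v‖² = b v v`. The
pairing is encoded by the map `A` sending `Q` to its Riesz representative, `⟨Q, x⟩ = b x (A Q)`;
in the theorem `b` is the form of `P` and `A Q = λ̄ P⁻¹ Lᵀ Q`. -/
noncomputable def quadraticLagrangian (b : BilinForm ℝ E) (A : V →ₗ[ℝ] E) (s x : E) (Q : V) : ℝ :=
  1 / 2 * b (x - s) (x - s) + b x (A Q)

lemma quadraticLagrangian_eq_complete_square (hb : b.IsSymm) (A : V →ₗ[ℝ] E) (s x : E) (Q : V) :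
    quadraticLagrangian b A s x Q =
      1 / 2 * b (x - (s - A Q)) (x - (s - A Q)) + (b s (A Q) - 1 / 2 * b (A Q) (A Q)) := by
  have hexpand := bilin_add_smul_self hb (x - s) (A Q) 1
  rw [one_smul, sub_add, LinearMap.map_sub₂ b x s (A Q)] at hexpand
  rw [quadraticLagrangian, hexpand]
  ring

lemma quadraticLagrangian_add_smul (b : BilinForm ℝ E) (A : V →ₗ[ℝ] E) (s x : E) (Q D : V)
    (t : ℝ) :
    quadraticLagrangian b A s x (Q + t • D) = quadraticLagrangian b A s x Q + t * b x (A D) := by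
  simp only [quadraticLagrangian, map_add, map_smul, smul_eq_mul, add_assoc]

lemma quadraticLagrangian_add_half_le (hb : b.IsSymm) (hC : Convex ℝ C) (hy : y ∈ C)
    (hproj : IsMinOn (fun z => b (z - (s - A Q)) (z - (s - A Q))) C y) (hx : x ∈ C) :
    quadraticLagrangian b A s y Q + 1 / 2 * b (x - y) (x - y) ≤ quadraticLagrangian b A s x Q := by
  rw [quadraticLagrangian_eq_complete_square hb, quadraticLagrangian_eq_complete_square hb]
  linarith [bilin_add_bilin_le_of_isMinOn hb hC hy hproj hx]

lemma isMinOn_quadraticLagrangian (hb : b.IsSymm)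
    (hproj : IsMinOn (fun z => b (z - (s - A Q)) (z - (s - A Q))) C y) :
    IsMinOn (quadraticLagrangian b A s · Q) C y := by
  refine isMinOn_iff.2 fun x hx => ?_
  rw [quadraticLagrangian_eq_complete_square hb, quadraticLagrangian_eq_complete_square hb]
  linarith [isMinOn_iff.1 hproj x hx]

lemma le_quadraticLagrangian_add_smul (hb : b.IsPosSemidef) (hC : Convex ℝ C) (hy : y ∈ C)
    (hproj : IsMinOn (fun z => b (z - (s - A Q)) (z - (s - A Q))) C y) (hx : x ∈ C) (D : V)
    (t : ℝ) :
    quadraticLagrangian b A s y Q + t * b y (A D) - t ^ 2 * (1 / 2 * b (A D) (A D)) ≤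
      quadraticLagrangian b A s x (Q + t • D) := by
  have hgrowth := quadraticLagrangian_add_half_le hb.isSymm hC hy hproj hx
  -- `-(t² / 2) b (A D) (A D)` is the minimum of `z ↦ (1/2) b z z + t b z (A D)`.
  have hsquare := hb.nonneg (x - y + t • A D)
  rw [bilin_add_smul_self hb.isSymm, LinearMap.map_sub₂ b x y (A D)] at hsquare
  rw [quadraticLagrangian_add_smul]
  linarith

lemma isMaxOn_quadraticLagrangian_of_isMaxOn_sInf (hb : b.IsPosSemidef) (hC : Convex ℝ C)
    (hB : Convex ℝ B) (hQ : Q ∈ B)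
    (hmax : IsMaxOn (fun Q => sInf ((quadraticLagrangian b A s · Q) '' C)) B Q) (hy : y ∈ C)
    (hproj : IsMinOn (fun z => b (z - (s - A Q)) (z - (s - A Q))) C y) :
    IsMaxOn (quadraticLagrangian b A s y) B Q := by
  refine isMaxOn_iff.2 fun Q' hQ' => ?_
  have hslope : 0 ≤ -b y (A (Q' - Q)) := by
    refine nonneg_of_forall_nonneg_add_mul
      (v := 1 / 2 * b (A (Q' - Q)) (A (Q' - Q))) fun t ht => ?_
    have hle := calc
      quadraticLagrangian b A s y Q + t * b y (A (Q' - Q)) -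
          t ^ 2 * (1 / 2 * b (A (Q' - Q)) (A (Q' - Q)))
        ≤ sInf ((quadraticLagrangian b A s · (Q + t • (Q' - Q))) '' C) :=
          le_csInf ⟨_, y, hy, rfl⟩ <| Set.forall_mem_image.2 fun x hx =>
            le_quadraticLagrangian_add_smul hb hC hy hproj hx _ t
      _ ≤ sInf ((quadraticLagrangian b A s · Q) '' C) :=
          hmax (hB.add_smul_sub_mem hQ hQ' ⟨ht.1.le, ht.2⟩)
      _ ≤ quadraticLagrangian b A s y Q :=
          csInf_le (isMinOn_quadraticLagrangian hb.isSymm hproj).bddBelow ⟨y, hy, rfl⟩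
    exact nonneg_of_mul_nonneg_right (by linarith) ht.1
  have hmove := quadraticLagrangian_add_smul b A s y Q (Q' - Q) 1
  rw [one_smul, add_sub_cancel] at hmove
  linarith

theorem quadratic_growth_half_add_support (hb : b.IsPosSemidef) (hC : Convex ℝ C)
    (hB : Convex ℝ B) {σ : E → ℝ} (hσ : ∀ x, IsGreatest ((fun Q => b x (A Q)) '' B) (σ x))
    (hQ : Q ∈ B) (hmax : IsMaxOn (fun Q => sInf ((quadraticLagrangian b A s · Q) '' C)) B Q)
    (hy : y ∈ C) (hproj : IsMinOn (fun z => b (z - (s - A Q)) (z - (s - A Q))) C y) (hx : x ∈ C) :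
    1 / 2 * b (y - s) (y - s) + σ y + 1 / 2 * b (x - y) (x - y) ≤
      1 / 2 * b (x - s) (x - s) + σ x := by
  obtain ⟨Q', hQ', hσy⟩ := (hσ y).1
  calc 1 / 2 * b (y - s) (y - s) + σ y + 1 / 2 * b (x - y) (x - y)
      = quadraticLagrangian b A s y Q' + 1 / 2 * b (x - y) (x - y) := by
        rw [← hσy, quadraticLagrangian]
    _ ≤ quadraticLagrangian b A s y Q + 1 / 2 * b (x - y) (x - y) := by
        gcongr
        exact isMaxOn_quadraticLagrangian_of_isMaxOn_sInf hb hC hB hQ hmax hy hproj hQ'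
    _ ≤ quadraticLagrangian b A s x Q := quadraticLagrangian_add_half_le hb.isSymm hC hy hproj hx
    _ ≤ 1 / 2 * b (x - s) (x - s) + σ x := by
        rw [quadraticLagrangian]
        gcongr
        exact (hσ x).2 ⟨Q, hQ, rfl⟩

end QuadraticLagrangian

section LpDuality

variable {ι : Type*} [Fintype ι] {φ ψ : ℝ≥0∞}

lemma dotProduct_le_norm_one_mul_norm_top (u v : ι → ℝ) :
    u ⬝ᵥ v ≤ ‖WithLp.toLp 1 u‖ * ‖WithLp.toLp ∞ v‖ := by
  rw [PiLp.norm_eq_of_L1, Finset.sum_mul]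
  refine Finset.sum_le_sum fun i _ => ?_
  calc u i * v i ≤ ‖u i‖ * ‖v i‖ := (le_abs_self _).trans (abs_mul _ _).le
    _ ≤ ‖u i‖ * ‖WithLp.toLp ∞ v‖ := by
      gcongr
      exact PiLp.norm_apply_le (WithLp.toLp ∞ v) i

lemma dotProduct_le_norm_mul_norm [φ.HolderConjugate ψ] (u v : ι → ℝ) :
    u ⬝ᵥ v ≤ ‖WithLp.toLp φ u‖ * ‖WithLp.toLp ψ v‖ := by
  by_cases hφ : φ = ∞
  · obtain rfl : ψ = 1 := (ENNReal.HolderConjugate.eq_top_iff_eq_one φ ψ).1 hφ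
    rw [hφ, dotProduct_comm, mul_comm]
    exact dotProduct_le_norm_one_mul_norm_top v u
  by_cases hψ : ψ = ∞
  · obtain rfl : φ = 1 := (ENNReal.HolderConjugate.eq_top_iff_eq_one ψ φ).1 hψ
    rw [hψ]
    exact dotProduct_le_norm_one_mul_norm_top u v
  have hconj := ENNReal.HolderConjugate.toReal_of_ne_top hφ hψ
  rw [PiLp.norm_eq_sum hconj.pos, PiLp.norm_eq_sum hconj.symm.pos]
  exact Real.inner_le_Lp_mul_Lq _ u v hconj

lemma norm_sign_le_one (r : ℝ) : ‖(SignType.sign r : ℝ)‖ ≤ 1 := by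
  rcases lt_trichotomy r 0 with h | h | h <;> simp [h]

lemma exists_norm_top_le_one_dotProduct_eq_norm_one (v : ι → ℝ) :
    ∃ q : ι → ℝ, ‖WithLp.toLp ∞ q‖ ≤ 1 ∧ q ⬝ᵥ v = ‖WithLp.toLp 1 v‖ := by
  refine ⟨fun i => SignType.sign (v i), ?_, ?_⟩
  · rw [PiLp.norm_toLp, pi_norm_le_iff_of_nonneg zero_le_one]
    exact fun i => norm_sign_le_one _
  · rw [PiLp.norm_eq_of_L1]
    exact Finset.sum_congr rfl fun i _ => sign_mul_self _

lemma exists_norm_one_le_one_dotProduct_eq_norm_top (v : ι → ℝ) :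
    ∃ q : ι → ℝ, ‖WithLp.toLp 1 q‖ ≤ 1 ∧ q ⬝ᵥ v = ‖WithLp.toLp ∞ v‖ := by
  classical
  cases isEmpty_or_nonempty ι
  · exact ⟨0, by simp, by simp [Subsingleton.elim v 0]⟩
  obtain ⟨i, hi⟩ := Finite.exists_max fun i => ‖v i‖
  refine ⟨Pi.single i (SignType.sign (v i) : ℝ), ?_, ?_⟩
  · exact (PiLp.norm_single 1 (fun _ : ι => ℝ) i _).trans_le (norm_sign_le_one _)
  · rw [single_dotProduct, sign_mul_self, PiLp.norm_toLp]
    exact le_antisymm (norm_le_pi_norm v i) ((pi_norm_le_iff_of_nonneg (abs_nonneg _)).2 hi)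

lemma exists_norm_le_one_dotProduct_eq_norm_of_toReal
    (hconj : φ.toReal.HolderConjugate ψ.toReal) (v : ι → ℝ) :
    ∃ q : ι → ℝ, ‖WithLp.toLp ψ q‖ ≤ 1 ∧ q ⬝ᵥ v = ‖WithLp.toLp φ v‖ := by
  obtain ⟨g, hg, hgv⟩ := (NNReal.isGreatest_Lp Finset.univ (fun i => ‖v i‖₊) hconj).1
  refine ⟨fun i => SignType.sign (v i) * (g i : ℝ), ?_, ?_⟩
  · have hsum : ∑ i, (g i : ℝ) ^ ψ.toReal ≤ 1 := by exact_mod_cast hg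
    rw [PiLp.norm_eq_sum hconj.symm.pos]
    refine Real.rpow_le_one (by positivity) (le_trans ?_ hsum) hconj.symm.one_div_nonneg
    gcongr with i
    rw [norm_mul, NNReal.norm_eq]
    exact mul_le_of_le_one_left (g i).coe_nonneg (norm_sign_le_one _)
  · calc ∑ i, SignType.sign (v i) * (g i : ℝ) * v i = ∑ i, ‖v i‖ * (g i : ℝ) :=
          Finset.sum_congr rfl fun i _ => by
            rw [mul_right_comm, sign_mul_self, Real.norm_eq_abs]
      _ = (∑ i, ‖v i‖ ^ φ.toReal) ^ (1 / φ.toReal) := by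
          have hgv_real := congrArg NNReal.toReal hgv
          push_cast at hgv_real
          exact hgv_real
      _ = ‖WithLp.toLp φ v‖ := (PiLp.norm_eq_sum hconj.pos _).symm

lemma exists_norm_le_one_dotProduct_eq_norm [φ.HolderConjugate ψ] (v : ι → ℝ) :
    ∃ q : ι → ℝ, ‖WithLp.toLp ψ q‖ ≤ 1 ∧ q ⬝ᵥ v = ‖WithLp.toLp φ v‖ := by
  by_cases hφ : φ = ∞
  · obtain rfl : ψ = 1 := (ENNReal.HolderConjugate.eq_top_iff_eq_one φ ψ).1 hφ
    rw [hφ]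
    exact exists_norm_one_le_one_dotProduct_eq_norm_top v
  by_cases hψ : ψ = ∞
  · obtain rfl : φ = 1 := (ENNReal.HolderConjugate.eq_top_iff_eq_one ψ φ).1 hψ
    rw [hψ]
    exact exists_norm_top_le_one_dotProduct_eq_norm_one v
  exact exists_norm_le_one_dotProduct_eq_norm_of_toReal
    (ENNReal.HolderConjugate.toReal_of_ne_top hφ hψ) v

end LpDuality

section MixedNorm

variable {κ ι : Type*} [Fintype ι] {φ ψ : ℝ≥0∞}

/-- The groupwise `ℓ_ψ` unit ball, the feasible set `B` of the dual problem. -/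
def groupwiseUnitBall (κ ι : Type*) [Fintype ι] (ψ : ℝ≥0∞) : Set (κ × ι → ℝ) :=
  {Q | ∀ l, ‖WithLp.toLp ψ fun i => Q (l, i)‖ ≤ 1}

lemma convex_groupwiseUnitBall [Fact (1 ≤ ψ)] : Convex ℝ (groupwiseUnitBall κ ι ψ) := by
  have hball : groupwiseUnitBall κ ι ψ = ⋂ l,
      ((WithLp.linearEquiv ψ ℝ (ι → ℝ)).symm.toLinearMap ∘ₗ LinearMap.funLeft ℝ ℝ (Prod.mk l)) ⁻¹'
        Metric.closedBall 0 1 := by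
    ext Q
    simp only [Set.mem_iInter, Set.mem_preimage, mem_closedBall_zero_iff]
    rfl
  rw [hball]
  exact convex_iInter fun l => (convex_closedBall 0 1).linear_preimage _

variable [Fintype κ]

/-- The mixed norm `‖V‖_{1,φ}`, the sum of the `ℓ_φ` norms of the groups `fun i => V (l, i)`. -/
noncomputable def mixedNorm (φ : ℝ≥0∞) (V : κ × ι → ℝ) : ℝ :=
  ∑ l, ‖WithLp.toLp φ fun i => V (l, i)‖

lemma dotProduct_eq_sum_groups (Q V : κ × ι → ℝ) :
    Q ⬝ᵥ V = ∑ l, (fun i => Q (l, i)) ⬝ᵥ fun i => V (l, i) :=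
  Fintype.sum_prod_type _

lemma isGreatest_dotProduct_mixedNorm [φ.HolderConjugate ψ] (V : κ × ι → ℝ) :
    IsGreatest ((· ⬝ᵥ V) '' groupwiseUnitBall κ ι ψ) (mixedNorm φ V) := by
  have : Fact (1 ≤ φ) := ⟨ENNReal.HolderConjugate.one_le φ ψ⟩
  refine ⟨?_, Set.forall_mem_image.2 fun Q hQ => ?_⟩
  · choose q hq hqV using fun l =>
      exists_norm_le_one_dotProduct_eq_norm (φ := φ) (ψ := ψ) fun i => V (l, i)
    refine ⟨fun p => q p.1 p.2, hq, ?_⟩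
    exact (dotProduct_eq_sum_groups _ V).trans (Finset.sum_congr rfl fun l _ => hqV l)
  · rw [dotProduct_eq_sum_groups]
    refine Finset.sum_le_sum fun l _ => (dotProduct_le_norm_mul_norm (φ := ψ) (ψ := φ) _ _).trans ?_
    exact mul_le_of_le_one_left (norm_nonneg _) (hQ l)

end MixedNorm

section WeightedInnerProduct

variable {n ι : Type*} [Fintype n] [DecidableEq n] [Fintype ι] {P : Matrix n n ℝ}

lemma isPosSemidef_toBilin'_s15 (hP : P.PosSemidef) : P.toBilin'.IsPosSemidef where
  eq := (isSymm_toBilin'_iff_isSymm.2 (isHermitian_iff_isSymm.1 hP.isHermitian)).eq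
  nonneg x := by simpa [toBilin'_apply'] using hP.dotProduct_mulVec_nonneg x

/-- The linear map `Q ↦ λ̄ P⁻¹ Lᵀ Q`, which represents the functionals `x ↦ λ̄⟨Q, Lx⟩` in the inner
product of `P`. -/
noncomputable def rieszMap (P : Matrix n n ℝ) (L : Matrix ι n ℝ) (lb : ℝ) :
    (ι → ℝ) →ₗ[ℝ] n → ℝ :=
  lb • P⁻¹.mulVecLin ∘ₗ Lᵀ.mulVecLin

lemma toBilin'_rieszMap (hP : IsUnit P.det) (L : Matrix ι n ℝ) (lb : ℝ) (x : n → ℝ) (Q : ι → ℝ) :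
    P.toBilin' x (rieszMap P L lb Q) = lb * (Q ⬝ᵥ L *ᵥ x) := by
  have happly : rieszMap P L lb Q = lb • P⁻¹ *ᵥ (Lᵀ *ᵥ Q) := rfl
  rw [happly, map_smul, smul_eq_mul, toBilin'_apply', mulVec_mulVec, mul_nonsing_inv _ hP,
    one_mulVec, mulVec_transpose, dotProduct_comm, ← dotProduct_mulVec]

lemma quadraticLagrangian_rieszMap (hP : IsUnit P.det) (L : Matrix ι n ℝ) (lb : ℝ) (s x : n → ℝ)
    (Q : ι → ℝ) :
    quadraticLagrangian P.toBilin' (rieszMap P L lb) s x Q =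
      1 / 2 * ((x - s) ⬝ᵥ P *ᵥ (x - s)) + lb * (Q ⬝ᵥ L *ᵥ x) := by
  rw [quadraticLagrangian, toBilin'_rieszMap hP, toBilin'_apply']

lemma isGreatest_toBilin'_rieszMap_mixedNorm {κ : Type*} [Fintype κ] {φ ψ : ℝ≥0∞}
    [φ.HolderConjugate ψ] (hP : IsUnit P.det) (L : Matrix (κ × ι) n ℝ) {lb : ℝ} (hlb : 0 ≤ lb)
    (x : n → ℝ) :
    IsGreatest ((fun Q => P.toBilin' x (rieszMap P L lb Q)) '' groupwiseUnitBall κ ι ψ)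
      (lb * mixedNorm φ (L *ᵥ x)) := by
  simp only [toBilin'_rieszMap hP]
  simpa only [Set.image_image] using
    (monotone_mul_left_of_nonneg hlb).map_isGreatest (isGreatest_dotProduct_mixedNorm (L *ᵥ x))

end WeightedInnerProduct

theorem stmt15_general {n κ ι : Type*} [Fintype n] [DecidableEq n] [Fintype κ] [Fintype ι]
    {C : Set (n → ℝ)} (hC : Convex ℝ C) {P : Matrix n n ℝ} (hP : P.PosDef)
    (L : Matrix (κ × ι) n ℝ) (s : n → ℝ) {lb : ℝ} (hlb : 0 ≤ lb)
    {φ ψ : ℝ≥0∞} [φ.HolderConjugate ψ]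
    {Qstar : κ × ι → ℝ} (hQmem : Qstar ∈ groupwiseUnitBall κ ι ψ)
    (hQmax : IsMaxOn
      (fun Q => sInf ((fun x => 1 / 2 * ((x - s) ⬝ᵥ P *ᵥ (x - s)) + lb * (Q ⬝ᵥ L *ᵥ x)) '' C))
      (groupwiseUnitBall κ ι ψ) Qstar)
    {xstar : n → ℝ} (hxmem : xstar ∈ C)
    (hxproj : IsMinOn (fun x => (x - (s - lb • P⁻¹ *ᵥ (Lᵀ *ᵥ Qstar))) ⬝ᵥ
      P *ᵥ (x - (s - lb • P⁻¹ *ᵥ (Lᵀ *ᵥ Qstar)))) C xstar) :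
    let F : (n → ℝ) → ℝ := fun x =>
      1 / 2 * ((x - s) ⬝ᵥ P *ᵥ (x - s)) + lb * mixedNorm φ (L *ᵥ x)
    IsMinOn F C xstar ∧ ∀ x' ∈ C, IsMinOn F C x' → x' = xstar := by
  intro F
  have : Fact (1 ≤ ψ) := ⟨ENNReal.HolderConjugate.one_le ψ φ⟩
  have hdet : IsUnit P.det := hP.det_pos.ne'.isUnit
  have hb := isPosSemidef_toBilin'_s15 hP.posSemidef
  simp only [← quadraticLagrangian_rieszMap hdet] at hQmax
  simp only [← toBilin'_apply'] at hxproj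
  have hgrowth (x : n → ℝ) (hx : x ∈ C) :
      F xstar + 1 / 2 * ((x - xstar) ⬝ᵥ P *ᵥ (x - xstar)) ≤ F x := by
    simpa only [toBilin'_apply'] using quadratic_growth_half_add_support hb hC
      convex_groupwiseUnitBall
      (isGreatest_toBilin'_rieszMap_mixedNorm hdet L hlb) hQmem hQmax hxmem hxproj hx
  refine ⟨isMinOn_iff.2 fun x hx => ?_, fun x' hx' hmin => by_contra fun hne => ?_⟩
  · have hnonneg := hP.posSemidef.dotProduct_mulVec_nonneg (x - xstar)
    rw [star_trivial] at hnonneg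
    linarith [hgrowth x hx]
  · have hpos := hP.dotProduct_mulVec_pos (sub_ne_zero.2 hne)
    rw [star_trivial] at hpos
    linarith [hgrowth x' hx', isMinOn_iff.1 hmin xstar hxmem]

/-- primal recovery from a dual solution. If `Q*` maximizes the dual
function `Q ↦ min_{x∈C} [(1/2)‖x − s‖_P² + λ̄⟨Q, Lx⟩]` over the groupwise `ℓ_ψ` unit
ball `B` (`ψ` the conjugate exponent of `φ`), then the `P`-weighted projection `x*` of
`s − λ̄ P⁻¹ Lᵀ Q*` onto `C` is the unique minimizer over `C` of the primal objective
`x ↦ (1/2)‖x − s‖_P² + λ̄ ‖Lx‖_{1,φ}`. -/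
theorem stmt15 {N G d : ℕ} (C : Set (Fin N → ℝ)) (hCne : C.Nonempty) (hCcl : IsClosed C)
    (hCco : Convex ℝ C)
    (P : Matrix (Fin N) (Fin N) ℝ) (hPsymm : P.IsSymm) (hPpos : P.PosDef)
    (L : Matrix (Fin G × Fin d) (Fin N) ℝ) (s : Fin N → ℝ) (lb : ℝ) (hlb : 0 < lb)
    (φ ψ : ℝ≥0∞) [Fact (1 ≤ φ)] [Fact (1 ≤ ψ)] (hconj : 1 / φ + 1 / ψ = 1)
    (B : Set (Fin G × Fin d → ℝ))
    (hB : B = {Q | ∀ l : Fin G, ‖(WithLp.equiv ψ (Fin d → ℝ)).symm fun i => Q (l, i)‖ ≤ 1})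
    (hfun : (Fin N → ℝ) → (Fin G × Fin d → ℝ) → ℝ)
    (hh : ∀ x Q, hfun x Q =
      (1 / 2 : ℝ) * ((x - s) ⬝ᵥ P.mulVec (x - s)) + lb * (Q ⬝ᵥ L.mulVec x))
    (Qstar : Fin G × Fin d → ℝ) (hQmem : Qstar ∈ B)
    (hQmax : ∀ Q ∈ B,
      sInf ((fun x => hfun x Q) '' C) ≤ sInf ((fun x => hfun x Qstar) '' C))
    (xstar : Fin N → ℝ) (hxmem : xstar ∈ C)
    (hxproj : ∀ x ∈ C,
      (xstar - (s - lb • P⁻¹.mulVec (Lᵀ.mulVec Qstar))) ⬝ᵥ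
          P.mulVec (xstar - (s - lb • P⁻¹.mulVec (Lᵀ.mulVec Qstar))) ≤
        (x - (s - lb • P⁻¹.mulVec (Lᵀ.mulVec Qstar))) ⬝ᵥ
          P.mulVec (x - (s - lb • P⁻¹.mulVec (Lᵀ.mulVec Qstar)))) :
    let F : (Fin N → ℝ) → ℝ := fun x =>
      (1 / 2 : ℝ) * ((x - s) ⬝ᵥ P.mulVec (x - s)) +
        lb * ∑ l : Fin G, ‖(WithLp.equiv φ (Fin d → ℝ)).symm fun i => L.mulVec x (l, i)‖
    (∀ x ∈ C, F xstar ≤ F x) ∧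
    (∀ x', x' ∈ C → (∀ x ∈ C, F x' ≤ F x) → x' = xstar) := by
  obtain rfl : hfun = _ := funext₂ hh
  have : φ.HolderConjugate ψ := ENNReal.holderConjugate_iff.2 (by simpa using hconj)
  subst hB
  exact stmt15_general hCco hPpos L s hlb.le hQmem hQmax hxmem hxproj
end
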